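/- Let m ≥ 2 and let c(m) = lim_{n→∞} C(ω, n, m). Then 2/(3m) ≤ c(m) ≤ 25/(36m). Moreover, if m = 2^k or m = 2^k + 2^{k−1} for some k ≥ 1 then c(m) = 2/(3m), and if m = 2^k + 2^{k−2} for some k ≥ 2 then c(m) = 25/(36m). -/

import Mathlib

/-!
The sequence satisfies `pd (2i+1) = 0` and `pd (2i) = 1 - pd i`, so comparing two windows of
length `m ≥ 3` that start at positions of the same parity amounts to comparing windows of length
`⌊m/2⌋` or `⌈m/2⌉` (`agree_even_even`, `agree_odd_odd`), while windows starting at positions of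
different parity never agree, since two consecutive ones do not occur (`not_agree_even_odd`).
Hence the correlation integral satisfies `c(m) = (c(⌊m/2⌋) + c(⌈m/2⌉)) / 4` for `m ≥ 3`, with
`c(1) = 5/9` and `c(2) = 1/3`; these limits are taken along `n = 2^N`, which suffices because the
full limit is assumed to exist.

The recursion says `c(2k) = c(k)/2` and that `c(2k+1)` is the mean of `c(2k)` and `c(2k+2)`.
So `c` interpolates `x ↦ 2/(3x)` linearly between consecutive points of the form `2^k`,
`3·2^(k-1)` (`tendsto_lower_half`, `tendsto_upper_half`). The lower bound is the
convexity of `2/(3x)`; the upper bound is the maximum of the quadratic `m c(m)` on each piece,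
`25/36` on `[2^k, 3·2^(k-1)]` (at `m = 5·2^(k-2)`) and `49/72 < 25/36` on `[3·2^(k-1), 2^(k+1)]`.
-/

open Filter Topology

/-- The period-doubling sequence (1-based): `pd i = k_i mod 2` where `k_i` is the
largest `k` such that `2^k` divides `i`. -/
def pd (i : ℕ) : ℕ := padicValNat 2 i % 2

/-- The `m`-word `w_i^(m) = ω_i ω_{i+1} ⋯ ω_{i+m-1}` of the period-doubling sequence. -/
def wordAt (i m : ℕ) : List ℕ := (List.range m).map (fun h => pd (i + h))

/-- An `m`-word is allowed if it occurs in the period-doubling sequence. -/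
def Allowed (m : ℕ) (v : List ℕ) : Prop := ∃ i, 1 ≤ i ∧ wordAt i m = v

/-- The complexity function of the period-doubling sequence. -/
noncomputable def pdComplexity (m : ℕ) : ℕ := Set.ncard {v | Allowed m v}

/-- `HasFreq m v c`: the frequency of the `m`-word `v` in the period-doubling
sequence exists and equals `c`. -/
def HasFreq (m : ℕ) (v : List ℕ) (c : ℝ) : Prop :=
  Tendsto (fun n : ℕ => (((Finset.Icc 1 n).filter (fun i => wordAt i m = v)).card : ℝ) / n)
    atTop (𝓝 c)

open Classical in
/-- The correlation sum `C(ω, n, m)` of the period-doubling sequence, for a distance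
threshold `ε` with `2^{-m} ≤ ε < 2^{-m+1}`. -/
noncomputable def corrSum (n m : ℕ) : ℝ :=
  (((Finset.range n ×ˢ Finset.range n).filter
      (fun p : ℕ × ℕ => ∀ h ∈ Finset.Icc 1 m, pd (p.1 + h) = pd (p.2 + h))).card : ℝ) / (n : ℝ) ^ 2

/-- The period-doubling substitution `ζ(0) = 01`, `ζ(1) = 00`, extended to a morphism
on finite words. -/
def substWord (w : List ℕ) : List ℕ := (w.map (fun a => if a = 0 then [0, 1] else [0, 0])).flatten

/-- The period-doubling substitution acting on one-sided infinite sequences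
(0-based indexing). -/
def substSeq (x : ℕ → ℕ) : ℕ → ℕ := fun n =>
  if n % 2 = 0 then 0 else if x (n / 2) = 0 then 1 else 0

/-! ### Elementary properties of the sequence -/

lemma pd_odd (i : ℕ) : pd (2 * i + 1) = 0 := by
  unfold pd
  rw [padicValNat.eq_zero_of_not_dvd (by omega)]

lemma pd_even (i : ℕ) (hi : 1 ≤ i) : pd (2 * i) = 1 - pd i := by
  unfold pd
  rw [padicValNat.mul (by norm_num) (by omega), padicValNat.self (by norm_num)]
  omega

lemma pd_le_one (i : ℕ) : pd i ≤ 1 := by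
  unfold pd
  omega

lemma pd_not_consecutive (i : ℕ) (h₁ : pd i = 1) (h₂ : pd (i + 1) = 1) : False := by
  rcases Nat.even_or_odd' i with ⟨k, rfl | rfl⟩
  · rw [pd_odd] at h₂
    omega
  · rw [pd_odd] at h₁
    omega

/-! ### Agreement of windows -/

/-- The windows of length `m` following positions `i` and `j` coincide. -/
def Agree (m i j : ℕ) : Prop := ∀ h ∈ Finset.Icc 1 m, pd (i + h) = pd (j + h)

lemma Agree.symm {m i j : ℕ} (h : Agree m i j) : Agree m j i := fun k hk => (h k hk).symm

lemma agree_comm (m i j : ℕ) : Agree m i j ↔ Agree m j i := ⟨Agree.symm, Agree.symm⟩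

lemma agree_even_even (m a b : ℕ) : Agree m (2 * a) (2 * b) ↔ Agree (m / 2) a b := by
  constructor
  · intro H h hh
    rw [Finset.mem_Icc] at hh
    have := H (2 * h) (by rw [Finset.mem_Icc]; omega)
    rw [← mul_add, ← mul_add, pd_even _ (by omega), pd_even _ (by omega)] at this
    have := pd_le_one (a + h)
    have := pd_le_one (b + h)
    omega
  · intro H h hh
    rw [Finset.mem_Icc] at hh
    rcases Nat.even_or_odd' h with ⟨k, rfl | rfl⟩
    · rw [← mul_add, ← mul_add, pd_even _ (by omega), pd_even _ (by omega),
        H k (by rw [Finset.mem_Icc]; omega)]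
    · rw [← add_assoc, ← add_assoc, ← mul_add, ← mul_add, pd_odd, pd_odd]

lemma agree_odd_odd (m a b : ℕ) :
    Agree m (2 * a + 1) (2 * b + 1) ↔ Agree ((m + 1) / 2) a b := by
  constructor
  · intro H h hh
    rw [Finset.mem_Icc] at hh
    have := H (2 * h - 1) (by rw [Finset.mem_Icc]; omega)
    rw [show 2 * a + 1 + (2 * h - 1) = 2 * (a + h) by omega,
      show 2 * b + 1 + (2 * h - 1) = 2 * (b + h) by omega,
      pd_even _ (by omega), pd_even _ (by omega)] at this
    have := pd_le_one (a + h)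
    have := pd_le_one (b + h)
    omega
  · intro H h hh
    rw [Finset.mem_Icc] at hh
    rcases Nat.even_or_odd' h with ⟨k, rfl | rfl⟩
    · rw [show 2 * a + 1 + 2 * k = 2 * (a + k) + 1 by ring,
        show 2 * b + 1 + 2 * k = 2 * (b + k) + 1 by ring, pd_odd, pd_odd]
    · rw [show 2 * a + 1 + (2 * k + 1) = 2 * (a + (k + 1)) by ring,
        show 2 * b + 1 + (2 * k + 1) = 2 * (b + (k + 1)) by ring,
        pd_even _ (by omega), pd_even _ (by omega), H (k + 1) (by rw [Finset.mem_Icc]; omega)]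

/-- If positions of different parity agree at an odd offset, there is a one at the
corresponding position of the desubstituted sequence. -/
lemma pd_eq_one_of_agree {m a b k : ℕ} (H : Agree m (2 * a) (2 * b + 1)) (hk : 2 * k + 1 ≤ m) :
    pd (b + k + 1) = 1 := by
  have := H (2 * k + 1) (by rw [Finset.mem_Icc]; omega)
  rw [show 2 * a + (2 * k + 1) = 2 * (a + k) + 1 by ring,
    show 2 * b + 1 + (2 * k + 1) = 2 * (b + k + 1) by ring, pd_odd, pd_even _ (by omega)] at this
  have := pd_le_one (b + k + 1)
  omega

lemma not_agree_even_odd {m : ℕ} (hm : 3 ≤ m) (a b : ℕ) : ¬ Agree m (2 * a) (2 * b + 1) :=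
  fun H => pd_not_consecutive (b + 1) (pd_eq_one_of_agree (k := 0) H (by omega))
    (pd_eq_one_of_agree (k := 1) H (by omega))

lemma agree_two_even_odd (a b : ℕ) :
    Agree 2 (2 * a) (2 * b + 1) ↔ pd (a + 1) = 1 ∧ pd (b + 1) = 1 := by
  constructor
  · intro H
    refine ⟨?_, pd_eq_one_of_agree (k := 0) H (by omega)⟩
    have := H 2 (by simp)
    rw [show 2 * a + 2 = 2 * (a + 1) by ring, show 2 * b + 1 + 2 = 2 * (b + 1) + 1 by ring,
      pd_odd, pd_even _ (by omega)] at this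
    have := pd_le_one (a + 1)
    omega
  · rintro ⟨ha, hb⟩ h hh
    rw [Finset.mem_Icc] at hh
    obtain rfl | rfl : h = 1 ∨ h = 2 := by omega
    · rw [show 2 * b + 1 + 1 = 2 * (b + 1) by ring, pd_odd, pd_even _ (by omega), hb]
    · rw [show 2 * a + 2 = 2 * (a + 1) by ring, show 2 * b + 1 + 2 = 2 * (b + 1) + 1 by ring,
        pd_odd, pd_even _ (by omega), ha]

/-! ### Counting agreeing pairs -/

open Classical in
/-- Indicator of `Agree`. -/
noncomputable def agreeInd (m i j : ℕ) : ℝ := if Agree m i j then 1 else 0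

lemma agreeInd_congr {m i j m' i' j' : ℕ} (h : Agree m i j ↔ Agree m' i' j') :
    agreeInd m i j = agreeInd m' i' j' := by
  classical
  exact if_congr h rfl rfl

/-- The number of ones among the first `n` terms. -/
noncomputable def onesCount (n : ℕ) : ℝ := ∑ i ∈ Finset.range n, (pd (i + 1) : ℝ)

/-- The number of agreeing pairs of positions below `n`. -/
noncomputable def agreeCount (n m : ℕ) : ℝ :=
  ∑ i ∈ Finset.range n, ∑ j ∈ Finset.range n, agreeInd m i j

lemma corrSum_eq (n m : ℕ) : corrSum n m = agreeCount n m / (n : ℝ) ^ 2 := by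
  classical
  unfold corrSum agreeCount agreeInd
  rw [← Finset.sum_product', Finset.sum_boole]
  congr!

lemma sum_range_two_mul (f : ℕ → ℝ) (n : ℕ) :
    ∑ i ∈ Finset.range (2 * n), f i = ∑ i ∈ Finset.range n, (f (2 * i) + f (2 * i + 1)) := by
  induction n with
  | zero => simp
  | succ n ih =>
    rw [mul_add, mul_one, Finset.sum_range_succ, Finset.sum_range_succ, ih, Finset.sum_range_succ]
    ring

lemma agreeCount_two_mul (n m : ℕ) :
    agreeCount (2 * n) m = agreeCount n (m / 2) + agreeCount n ((m + 1) / 2)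
      + 2 * ∑ a ∈ Finset.range n, ∑ b ∈ Finset.range n, agreeInd m (2 * a) (2 * b + 1) := by
  have hee (a b : ℕ) : agreeInd m (2 * a) (2 * b) = agreeInd (m / 2) a b := by
    exact agreeInd_congr (agree_even_even m a b)
  have hoo (a b : ℕ) : agreeInd m (2 * a + 1) (2 * b + 1) = agreeInd ((m + 1) / 2) a b := by
    exact agreeInd_congr (agree_odd_odd m a b)
  have hoe (a b : ℕ) : agreeInd m (2 * a + 1) (2 * b) = agreeInd m (2 * b) (2 * a + 1) := by
    exact agreeInd_congr (agree_comm _ _ _)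
  have hswap : ∑ a ∈ Finset.range n, ∑ b ∈ Finset.range n, agreeInd m (2 * b) (2 * a + 1)
      = ∑ a ∈ Finset.range n, ∑ b ∈ Finset.range n, agreeInd m (2 * a) (2 * b + 1) :=
    Finset.sum_comm
  unfold agreeCount
  simp only [sum_range_two_mul, hee, hoo, hoe, Finset.sum_add_distrib, hswap]
  ring

lemma agreeCount_rec (n m : ℕ) (hm : 3 ≤ m) :
    agreeCount (2 * n) m = agreeCount n (m / 2) + agreeCount n ((m + 1) / 2) := by
  have h (a b : ℕ) : agreeInd m (2 * a) (2 * b + 1) = 0 := by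
    simp [agreeInd, not_agree_even_odd hm]
  rw [agreeCount_two_mul]
  simp [h]

lemma pd_eq_zero_or_one (i : ℕ) : pd i = 0 ∨ pd i = 1 := by
  have := pd_le_one i
  omega

lemma agreeCount_one (n : ℕ) :
    agreeCount n 1 = onesCount n ^ 2 + (n - onesCount n) ^ 2 := by
  have h (i j : ℕ) : agreeInd 1 i j
      = (pd (i + 1) : ℝ) * pd (j + 1) + (1 - (pd (i + 1) : ℝ)) * (1 - (pd (j + 1) : ℝ)) := by
    rcases pd_eq_zero_or_one (i + 1) with hi | hi <;>
      rcases pd_eq_zero_or_one (j + 1) with hj | hj <;> simp [agreeInd, Agree, hi, hj]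
  have hn : (n : ℝ) - onesCount n = ∑ i ∈ Finset.range n, (1 - (pd (i + 1) : ℝ)) := by
    simp [onesCount]
  rw [hn]
  simp only [agreeCount, h, Finset.sum_add_distrib, ← Finset.mul_sum, ← Finset.sum_mul,
    onesCount, sq]

lemma agreeCount_two (n : ℕ) :
    agreeCount (2 * n) 2 = 2 * agreeCount n 1 + 2 * onesCount n ^ 2 := by
  have h (a b : ℕ) : agreeInd 2 (2 * a) (2 * b + 1) = (pd (a + 1) : ℝ) * pd (b + 1) := by
    rcases pd_eq_zero_or_one (a + 1) with hi | hi <;>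
      rcases pd_eq_zero_or_one (b + 1) with hj | hj <;>
      simp [agreeInd, agree_two_even_odd, hi, hj]
  rw [agreeCount_two_mul]
  simp only [h, ← Finset.mul_sum, ← Finset.sum_mul, ← onesCount.eq_1]
  norm_num
  ring

lemma onesCount_two_mul (n : ℕ) : onesCount (2 * n) = n - onesCount n := by
  have h (i : ℕ) : (pd (2 * i + 1 + 1) : ℝ) = 1 - (pd (i + 1) : ℝ) := by
    rw [show 2 * i + 1 + 1 = 2 * (i + 1) by ring, pd_even _ (by omega), Nat.cast_sub (pd_le_one _),
      Nat.cast_one]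
  simp [onesCount, sum_range_two_mul, pd_odd, h]

lemma onesCount_two_pow (N : ℕ) :
    onesCount (2 ^ N) / 2 ^ N = (1 - (-1 / 2 : ℝ) ^ N) / 3 := by
  induction N with
  | zero => simp [onesCount, pd]
  | succ N ih =>
    rw [div_eq_iff (by positivity)] at ih ⊢
    rw [pow_succ', onesCount_two_mul, ih]
    push_cast
    ring

/-! ### Limits along powers of two -/

lemma tendsto_ones :
    Tendsto (fun N : ℕ => onesCount (2 ^ N) / (2 : ℝ) ^ N) atTop (𝓝 (1 / 3)) := by
  simp only [onesCount_two_pow]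
  have h : Tendsto (fun N : ℕ => (-1 / 2 : ℝ) ^ N) atTop (𝓝 0) :=
    tendsto_pow_atTop_nhds_zero_of_abs_lt_one (by norm_num [abs_lt])
  simpa using (h.const_sub 1).div_const 3

lemma tendsto_one : Tendsto (fun N : ℕ => corrSum (2 ^ N) 1) atTop (𝓝 (5 / 9)) := by
  have h := (tendsto_ones.pow 2).add ((tendsto_ones.const_sub 1).pow 2)
  rw [show (1 / 3 : ℝ) ^ 2 + (1 - 1 / 3) ^ 2 = 5 / 9 by norm_num] at h
  refine h.congr fun N => ?_
  rw [corrSum_eq, agreeCount_one]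
  push_cast
  field_simp

lemma tendsto_two : Tendsto (fun N : ℕ => corrSum (2 ^ N) 2) atTop (𝓝 (1 / 3)) := by
  rw [← tendsto_add_atTop_iff_nat 1]
  have h := (tendsto_one.add (tendsto_ones.pow 2)).div_const 2
  rw [show (5 / 9 + (1 / 3 : ℝ) ^ 2) / 2 = 1 / 3 by norm_num] at h
  refine h.congr fun N => ?_
  rw [pow_succ' 2 N, corrSum_eq, corrSum_eq, agreeCount_two]
  push_cast
  field_simp

lemma tendsto_rec {m : ℕ} (hm : 3 ≤ m) {x y : ℝ}
    (hx : Tendsto (fun N : ℕ => corrSum (2 ^ N) (m / 2)) atTop (𝓝 x))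
    (hy : Tendsto (fun N : ℕ => corrSum (2 ^ N) ((m + 1) / 2)) atTop (𝓝 y)) :
    Tendsto (fun N : ℕ => corrSum (2 ^ N) m) atTop (𝓝 ((x + y) / 4)) := by
  rw [← tendsto_add_atTop_iff_nat 1]
  refine ((hx.add hy).div_const 4).congr fun N => ?_
  rw [pow_succ', corrSum_eq, corrSum_eq, corrSum_eq, agreeCount_rec _ _ hm]
  push_cast
  field_simp
  ring

/-! ### The piecewise linear formula -/

lemma tendsto_three : Tendsto (fun N : ℕ => corrSum (2 ^ N) 3) atTop (𝓝 (2 / 9)) := by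
  have h := tendsto_rec (m := 3) (by norm_num) tendsto_one tendsto_two
  convert h using 2
  norm_num

/-- A formula linear in `m`, valid for all windows of lengths `p ≤ m ≤ r`, propagates to
`2p ≤ m ≤ 2r`: the recursion halves the mean of the values at `⌊m/2⌋` and `⌈m/2⌉`,
and these two lengths add up to `m`. -/
lemma tendsto_linear_double {p r : ℕ} (hp : 2 ≤ p) {A B : ℝ}
    (H : ∀ m : ℕ, p ≤ m → m ≤ r →
      Tendsto (fun N : ℕ => corrSum (2 ^ N) m) atTop (𝓝 (A - B * m)))
    (m : ℕ) (h₁ : 2 * p ≤ m) (h₂ : m ≤ 2 * r) :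
    Tendsto (fun N : ℕ => corrSum (2 ^ N) m) atTop (𝓝 (A / 2 - B / 4 * m)) := by
  have h := tendsto_rec (m := m) (by omega) (H (m / 2) (by omega) (by omega))
    (H ((m + 1) / 2) (by omega) (by omega))
  convert h using 2
  have hsum : ((m / 2 : ℕ) : ℝ) + (((m + 1) / 2 : ℕ) : ℝ) = m := by
    rw [← Nat.cast_add]
    congr 1
    omega
  rw [← hsum]
  ring

/-- On `[2^(k+1), 3·2^k]` the limit is the chord of `x ↦ 2/(3x)`. -/
lemma tendsto_lower_half (k : ℕ) : ∀ m : ℕ, 2 * 2 ^ k ≤ m → m ≤ 3 * 2 ^ k →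
    Tendsto (fun N : ℕ => corrSum (2 ^ N) m) atTop
      (𝓝 (5 / 9 / 2 ^ k - 1 / 9 / 4 ^ k * m)) := by
  induction k with
  | zero =>
    intro m h₁ h₂
    obtain rfl | rfl : m = 2 ∨ m = 3 := by omega
    · convert tendsto_two using 2
      norm_num
    · convert tendsto_three using 2
      norm_num
  | succ k ih =>
    intro m h₁ h₂
    rw [pow_succ] at h₁ h₂
    have hk : 1 ≤ 2 ^ k := Nat.one_le_two_pow
    convert tendsto_linear_double (by omega) ih m (by omega) (by omega) using 2
    rw [pow_succ, pow_succ]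
    field_simp

/-- On `[3·2^k, 2^(k+2)]` the limit is the chord of `x ↦ 2/(3x)`. -/
lemma tendsto_upper_half (k : ℕ) : ∀ m : ℕ, 3 * 2 ^ k ≤ m → m ≤ 4 * 2 ^ k →
    Tendsto (fun N : ℕ => corrSum (2 ^ N) m) atTop
      (𝓝 (7 / 18 / 2 ^ k - 1 / 18 / 4 ^ k * m)) := by
  induction k with
  | zero =>
    intro m h₁ h₂
    obtain rfl | rfl : m = 3 ∨ m = 4 := by omega
    · convert tendsto_three using 2
      norm_num
    · convert tendsto_rec (m := 4) (by norm_num) tendsto_two tendsto_two using 2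
      norm_num
  | succ k ih =>
    intro m h₁ h₂
    rw [pow_succ] at h₁ h₂
    have hk : 1 ≤ 2 ^ k := Nat.one_le_two_pow
    convert tendsto_linear_double (by omega) ih m (by omega) (by omega) using 2
    rw [pow_succ, pow_succ]
    field_simp

theorem pd_correlation_integral_bounds (m : ℕ) (hm : 2 ≤ m) (c : ℝ)
    (hc : Tendsto (fun n => corrSum n m) atTop (𝓝 c)) :
    2 / (3 * m : ℝ) ≤ c ∧ c ≤ 25 / (36 * m : ℝ) ∧
    ((∃ k, 1 ≤ k ∧ (m = 2 ^ k ∨ m = 2 ^ k + 2 ^ (k - 1))) → c = 2 / (3 * m : ℝ)) ∧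
    ((∃ k, 2 ≤ k ∧ m = 2 ^ k + 2 ^ (k - 2)) → c = 25 / (36 * m : ℝ)) := by
  have hsub : Tendsto (fun N : ℕ => corrSum (2 ^ N) m) atTop (𝓝 c) :=
    hc.comp (tendsto_pow_atTop_atTop_of_one_lt (by norm_num))
  have hm0 : (0 : ℝ) < m := by positivity
  have hfour (k : ℕ) : (4 : ℝ) ^ k = 2 ^ k * 2 ^ k := by
    rw [← mul_pow]
    norm_num
  have hlow (k : ℕ) (h₁ : 2 * 2 ^ k ≤ m) (h₂ : m ≤ 3 * 2 ^ k) :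
      c = (5 * 2 ^ k - m) / (9 * (2 ^ k * 2 ^ k)) := by
    rw [tendsto_nhds_unique hsub (tendsto_lower_half k m h₁ h₂), hfour]
    field_simp
  have hupp (k : ℕ) (h₁ : 3 * 2 ^ k ≤ m) (h₂ : m ≤ 4 * 2 ^ k) :
      c = (7 * 2 ^ k - m) / (18 * (2 ^ k * 2 ^ k)) := by
    rw [tendsto_nhds_unique hsub (tendsto_upper_half k m h₁ h₂), hfour]
    field_simp
  have hbounds : 2 / (3 * m : ℝ) ≤ c ∧ c ≤ 25 / (36 * m : ℝ) := by
    obtain ⟨k, hk₁, hk₂⟩ : ∃ k, 2 * 2 ^ k ≤ m ∧ m ≤ 4 * 2 ^ k := by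
      refine ⟨Nat.log 2 (m / 2), ?_, ?_⟩
      · have := Nat.pow_log_le_self 2 (x := m / 2) (by omega)
        omega
      · have := Nat.lt_pow_succ_log_self (b := 2) (by norm_num) (m / 2)
        rw [pow_succ] at this
        omega
    have hq : (0 : ℝ) < 2 ^ k := by positivity
    have hk₁' : (2 : ℝ) * 2 ^ k ≤ m := by exact_mod_cast hk₁
    have hk₂' : (m : ℝ) ≤ 4 * 2 ^ k := by exact_mod_cast hk₂
    rcases le_total m (3 * 2 ^ k) with h | h
    · have h' : (m : ℝ) ≤ 3 * 2 ^ k := by exact_mod_cast h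
      rw [hlow k hk₁ h, div_le_div_iff₀ (by positivity) (by positivity),
        div_le_div_iff₀ (by positivity) (by positivity)]
      generalize (2 : ℝ) ^ k = q at *
      constructor
      · nlinarith [mul_nonneg (sub_nonneg.2 hk₁') (sub_nonneg.2 h')]
      · nlinarith [sq_nonneg (5 * q - 2 * m)]
    · have h' : 3 * 2 ^ k ≤ (m : ℝ) := by exact_mod_cast h
      rw [hupp k h hk₂, div_le_div_iff₀ (by positivity) (by positivity),
        div_le_div_iff₀ (by positivity) (by positivity)]
      generalize (2 : ℝ) ^ k = q at *
      constructor
      · nlinarith [mul_nonneg (sub_nonneg.2 h') (sub_nonneg.2 hk₂')]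
      · nlinarith [sq_nonneg (7 * q - 2 * m)]
  refine ⟨hbounds.1, hbounds.2, ?_, ?_⟩
  · rintro ⟨k, hk, h⟩
    obtain ⟨k, rfl⟩ := Nat.exists_eq_add_of_le' hk
    rw [Nat.add_sub_cancel, pow_succ] at h
    have hpos : 1 ≤ 2 ^ k := Nat.one_le_two_pow
    rw [hlow k (by omega) (by omega)]
    rcases h with rfl | rfl
    · push_cast
      field_simp
      ring
    · push_cast
      field_simp
      ring
  · rintro ⟨k, hk, h⟩
    obtain ⟨k, rfl⟩ := Nat.exists_eq_add_of_le' hk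
    rw [Nat.add_sub_cancel, pow_succ, pow_succ] at h
    have hpow : 2 ^ (k + 1) = 2 ^ k * 2 := pow_succ 2 k
    rw [hlow (k + 1) (by omega) (by omega), h, pow_succ]
    push_cast
    field_simp
    ring
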